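/- Suppose m ≥ 1 is an integer divisible by l(l−1). Then the total number of minimal generators of I^{(m)} equals 2m − m/l + 1; that is, dim_K ( I^{(m)} / ( (x,y,z)·I^{(m)} ) ) = 2m − m/l + 1, which is one more than the least degree of a nonzero homogeneous element of I^{(m)}. -/

import Mathlib

open MvPolynomial Filter

/-- The degree-`d` homogeneous component of a homogeneous ideal `J ⊆ K[x,y,z]`,
as a `K`-vector subspace. -/
noncomputable def degComp {K : Type*} [Field K] (J : Ideal (MvPolynomial (Fin 3) K)) (d : ℕ) :
    Submodule K (MvPolynomial (Fin 3) K) :=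
  Submodule.restrictScalars K J ⊓ homogeneousSubmodule (Fin 3) K d

/-- `dim_K J_d`. -/
noncomputable def hdim {K : Type*} [Field K] (J : Ideal (MvPolynomial (Fin 3) K)) (d : ℕ) : ℕ :=
  Module.finrank K (degComp J d)

/-- The subspace `R_1 · J_{d-1}` of products of linear forms with degree-`(d-1)` elements. -/
noncomputable def oneGen {K : Type*} [Field K] (J : Ideal (MvPolynomial (Fin 3) K)) (d : ℕ) :
    Submodule K (MvPolynomial (Fin 3) K) :=
  Submodule.span K
    {x | ∃ f ∈ homogeneousSubmodule (Fin 3) K 1, ∃ g ∈ degComp J (d - 1), x = f * g}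

/-- `v_d(J) = dim_K J_d / (R_1 · J_{d-1})`, the number of minimal generators of `J`
in degree `d`. -/
noncomputable def vnum {K : Type*} [Field K] (J : Ideal (MvPolynomial (Fin 3) K)) (d : ℕ) : ℕ :=
  Module.finrank K
    (↥(degComp J d) ⧸ Submodule.comap (degComp J d).subtype (oneGen J d))

/-!
Choose coordinates in which the line is `x = 0` and the point off it is `(1 : 0 : 0)`. Let `F` be
the product of the `l` linear forms in `y, z` that vanish at the points of the line, and let
`𝔫 = (y, z)`. Then `I^{(m)}` is spanned by its elements `c x^k`, and the coefficients `c` of `x^k`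
form the ideal `F^(m-k) 𝔫^(m-l(m-k))` of `K[y, z]`, where negative exponents count as `0`. The
generators of `I^{(m)}` can thus be counted separately for each `k`. Let `m = l n`. If `m - k ≥ n`,
the only generator is `F^(m-k) x^k`. If `m - k < n`, then after division by `F^(m-k)` the multiples
of `F` already come from `x^(k-1)`, so that evaluating leading forms at the `l` points of the line
identifies the space of new generators with `K^l`. The total is `(m - n + 1) + n l = 2m - n + 1`,
and the least degree `2m - n` is attained by `F^n x^(m-n)`.
-/

section RelFinrank

variable {R V W U : Type*} [Ring R] [AddCommGroup V] [Module R V] [AddCommGroup W] [Module R W]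
  [AddCommGroup U] [Module R U]

/-- The rank of `A / (A ∩ B)` for submodules `A` and `B` of a common module, with the value `0` when
the quotient has infinite rank. The inclusion `B ≤ A` is not part of the definition. -/
noncomputable def relFinrank (A B : Submodule R V) : ℕ :=
  Module.finrank R (A ⧸ B.submoduleOf A)

lemma relFinrank_eq_of_surjective {A B : Submodule R V} (φ : A →ₗ[R] U)
    (hφ : Function.Surjective φ) (hker : LinearMap.ker φ = B.submoduleOf A) :
    relFinrank A B = Module.finrank R U := by
  rw [relFinrank, ← hker]
  exact (φ.quotKerEquivOfSurjective hφ).finrank_eq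

lemma relFinrank_map_of_injective {T : V →ₗ[R] W} (hT : Function.Injective T)
    (A B : Submodule R V) : relFinrank (A.map T) (B.map T) = relFinrank A B := by
  refine (Submodule.Quotient.equiv _ _ (Submodule.equivMapOfInjective T hT A) ?_).finrank_eq.symm
  ext y
  obtain ⟨x, rfl⟩ := (Submodule.equivMapOfInjective T hT A).surjective y
  simp [Submodule.submoduleOf, Submodule.mem_map, hT.eq_iff]

lemma relFinrank_eq_sum {k V W ι : Type*} [Field k] [AddCommGroup V] [Module k V]
    [AddCommGroup W] [Module k W] [Fintype ι] {A B : Submodule k V} (a b : ι → Submodule k W)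
    (π : ι → V →ₗ[k] W) (hA : ∀ x ∈ A, ∀ i, π i x ∈ a i)
    (hsurj : ∀ w : ι → W, (∀ i, w i ∈ a i) → ∃ x ∈ A, ∀ i, π i x = w i)
    (hker : ∀ x ∈ A, x ∈ B ↔ ∀ i, π i x ∈ b i)
    [∀ i, Module.Finite k (a i ⧸ (b i).submoduleOf (a i))] :
    relFinrank A B = ∑ i, relFinrank (a i) (b i) := by
  let φ : A →ₗ[k] ((i : ι) → a i ⧸ (b i).submoduleOf (a i)) :=
    LinearMap.pi fun i ↦ Submodule.mkQ _ ∘ₗ (π i).restrict fun x hx ↦ hA x hx i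
  have hφ : Function.Surjective φ := by
    intro u
    choose w hw using fun i ↦ Submodule.mkQ_surjective _ (u i)
    obtain ⟨x, hxA, hx⟩ := hsurj (fun i ↦ w i) fun i ↦ (w i).2
    refine ⟨⟨x, hxA⟩, funext fun i ↦ ?_⟩
    rw [← hw i]
    exact congrArg (Submodule.mkQ _) (Subtype.ext (hx i))
  have hkerφ : LinearMap.ker φ = B.submoduleOf A := by
    ext x
    rw [LinearMap.mem_ker, _root_.funext_iff]
    exact (forall_congr' fun i ↦ Submodule.Quotient.mk_eq_zero _).trans (hker x x.2).symm
  rw [relFinrank_eq_of_surjective φ hφ hkerφ, Module.finrank_pi_fintype]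
  rfl

end RelFinrank

section IdealRelFinrank

variable {K A B : Type*} [CommRing K] [CommRing A] [CommRing B] [Algebra K A] [Algebra K B]

lemma restrictScalars_map_equiv (e : A ≃ₐ[K] B) (I : Ideal A) :
    (I.map e).restrictScalars K = (I.restrictScalars K).map e.toLinearMap := by
  ext x
  exact Ideal.mem_map_of_equiv e x

lemma relFinrank_map_equiv (e : A ≃ₐ[K] B) (I J : Ideal A) :
    relFinrank ((I.map e).restrictScalars K) ((J.map e).restrictScalars K) =
      relFinrank (I.restrictScalars K) (J.restrictScalars K) := by
  simp only [restrictScalars_map_equiv]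
  exact relFinrank_map_of_injective e.injective _ _

lemma restrictScalars_span_singleton_mul (g : A) (I : Ideal A) :
    (Ideal.span {g} * I).restrictScalars K = (I.restrictScalars K).map (LinearMap.mulLeft K g) := by
  ext x
  exact Ideal.mem_span_singleton_mul

lemma relFinrank_span_singleton_mul [IsDomain A] {g : A} (hg : g ≠ 0) (I J : Ideal A) :
    relFinrank ((Ideal.span {g} * I).restrictScalars K)
      ((Ideal.span {g} * J).restrictScalars K) =
      relFinrank (I.restrictScalars K) (J.restrictScalars K) := by
  simp only [restrictScalars_span_singleton_mul]
  exact relFinrank_map_of_injective (mul_right_injective₀ hg) _ _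

end IdealRelFinrank

section CoeffIdeal

open scoped Polynomial

variable {S : Type*} [CommRing S]

/-- The ideal of `S[X]` of the polynomials whose `k`-th coefficient lies in `a k`, for an
increasing sequence `a` of ideals of `S`. -/
def coeffIdeal (a : ℕ →o Ideal S) : Ideal S[X] where
  carrier := {f | ∀ k, f.coeff k ∈ a k}
  add_mem' hf hg k := by
    rw [Polynomial.coeff_add]
    exact add_mem (hf k) (hg k)
  zero_mem' k := by
    rw [Polynomial.coeff_zero]
    exact zero_mem _
  smul_mem' c f hf k := by
    rw [smul_eq_mul, Polynomial.coeff_mul]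
    exact sum_mem fun ij hij ↦ Ideal.mul_mem_left _ _ <|
      a.monotone (Finset.HasAntidiagonal.antidiagonal.snd_le hij) (hf ij.2)

lemma mem_coeffIdeal {a : ℕ →o Ideal S} {f : S[X]} :
    f ∈ coeffIdeal a ↔ ∀ k, f.coeff k ∈ a k :=
  Iff.rfl

lemma monomial_mem_coeffIdeal {a : ℕ →o Ideal S} {k : ℕ} {c : S} (hc : c ∈ a k) :
    Polynomial.monomial k c ∈ coeffIdeal a := by
  intro j
  rw [Polynomial.coeff_monomial]
  split_ifs with h
  · exact h ▸ hc
  · exact zero_mem _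

lemma coeffIdeal_le_iff {a : ℕ →o Ideal S} {J : Ideal S[X]} :
    coeffIdeal a ≤ J ↔ ∀ k, ∀ c ∈ a k, Polynomial.monomial k c ∈ J := by
  refine ⟨fun h k c hc ↦ h (monomial_mem_coeffIdeal hc), fun h f hf ↦ ?_⟩
  rw [f.as_sum_support]
  exact sum_mem fun k _ ↦ h k _ (hf k)

lemma coeffIdeal_inf (a b : ℕ →o Ideal S) :
    coeffIdeal (a ⊓ b) = coeffIdeal a ⊓ coeffIdeal b := by
  ext f
  simp only [Ideal.mem_inf, mem_coeffIdeal, ← forall_and]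
  rfl

lemma coeffIdeal_iInf {ι : Sort*} (a : ι → ℕ →o Ideal S) :
    coeffIdeal (⨅ i, a i) = ⨅ i, coeffIdeal (a i) := by
  ext f
  simp only [Ideal.mem_iInf, mem_coeffIdeal, OrderHom.iInf_apply]
  exact forall_comm

lemma map_C_eq_coeffIdeal (I : Ideal S) :
    I.map Polynomial.C = coeffIdeal (OrderHom.const ℕ I) := by
  ext f
  exact Ideal.mem_map_C_iff

lemma span_X_sup_map_C_eq_comap (I : Ideal S) :
    Ideal.span {Polynomial.X} ⊔ I.map Polynomial.C =
      I.comap (Polynomial.constantCoeff : S[X] →+* S) := by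
  apply le_antisymm
  · rw [sup_le_iff, Ideal.span_singleton_le_iff_mem, Ideal.map_le_iff_le_comap]
    exact ⟨by simp, fun c hc ↦ by simpa using hc⟩
  · intro f hf
    rw [← Polynomial.X_mul_divX_add f]
    exact add_mem (Ideal.mem_sup_left (Ideal.mul_mem_right _ _ (Ideal.mem_span_singleton_self _)))
      (Ideal.mem_sup_right (Ideal.mem_map_of_mem Polynomial.C hf))

/-- The coefficient ideals of the product of `⟨X⟩ + I S[X]` with `coeffIdeal a`. -/
def stepIdeals (I : Ideal S) (a : ℕ →o Ideal S) : ℕ →o Ideal S where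
  toFun
    | 0 => I * a 0
    | k + 1 => I * a (k + 1) ⊔ a k
  monotone' := monotone_nat_of_le_succ fun
    | 0 => Ideal.mul_le_right.trans le_sup_right
    | k + 1 => (sup_le Ideal.mul_le_right (a.monotone k.le_succ)).trans le_sup_right

lemma stepIdeals_zero (I : Ideal S) (a : ℕ →o Ideal S) : stepIdeals I a 0 = I * a 0 := rfl

lemma stepIdeals_succ (I : Ideal S) (a : ℕ →o Ideal S) (k : ℕ) :
    stepIdeals I a (k + 1) = I * a (k + 1) ⊔ a k := rfl

lemma mul_le_stepIdeals (I : Ideal S) (a : ℕ →o Ideal S) (k : ℕ) :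
    I * a k ≤ stepIdeals I a k := by
  cases k with
  | zero => exact le_rfl
  | succ k => exact le_sup_left

lemma span_X_mul_coeffIdeal_le (I : Ideal S) (a : ℕ →o Ideal S) :
    Ideal.span {Polynomial.X} * coeffIdeal a ≤ coeffIdeal (stepIdeals I a) := by
  rw [Ideal.span_singleton_mul_le_iff]
  intro f hf k
  cases k with
  | zero =>
    rw [Polynomial.coeff_X_mul_zero]
    exact zero_mem _
  | succ k =>
    rw [Polynomial.coeff_X_mul]
    exact Ideal.mem_sup_right (hf k)

lemma map_C_mul_coeffIdeal_le (I : Ideal S) (a : ℕ →o Ideal S) :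
    I.map Polynomial.C * coeffIdeal a ≤ coeffIdeal (stepIdeals I a) := by
  rw [Ideal.mul_le]
  intro r hr f hf k
  rw [Polynomial.coeff_mul]
  exact sum_mem fun ij hij ↦ mul_le_stepIdeals I a k <| Ideal.mul_mem_mul
    (Ideal.mem_map_C_iff.mp hr _)
    (a.monotone (Finset.HasAntidiagonal.antidiagonal.snd_le hij) (hf ij.2))

theorem span_X_sup_map_C_mul_coeffIdeal (I : Ideal S) (a : ℕ →o Ideal S) :
    (Ideal.span {Polynomial.X} ⊔ I.map Polynomial.C) * coeffIdeal a =
      coeffIdeal (stepIdeals I a) := by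
  have monomial_mem : ∀ k, ∀ c ∈ I * a k,
      Polynomial.monomial k c ∈
        (Ideal.span {Polynomial.X} ⊔ I.map Polynomial.C) * coeffIdeal a := by
    intro k c hc
    refine Submodule.mul_induction_on hc (fun r hr s hs ↦ ?_) fun x y hx hy ↦ ?_
    · rw [← Polynomial.C_mul_monomial]
      exact Ideal.mul_mem_mul (Ideal.mem_sup_right (Ideal.mem_map_of_mem Polynomial.C hr))
        (monomial_mem_coeffIdeal hs)
    · rw [map_add]
      exact add_mem hx hy
  apply le_antisymm
  · rw [Ideal.sup_mul]
    exact sup_le (span_X_mul_coeffIdeal_le I a) (map_C_mul_coeffIdeal_le I a)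
  · rw [coeffIdeal_le_iff]
    rintro (_ | k) c hc
    · exact monomial_mem 0 c hc
    · obtain ⟨x, hx, y, hy, rfl⟩ := Submodule.mem_sup.mp hc
      rw [map_add]
      refine add_mem (monomial_mem _ x hx) ?_
      rw [← Polynomial.X_mul_monomial]
      exact Ideal.mul_mem_mul (Ideal.mem_sup_left (Ideal.mem_span_singleton_self _))
        (monomial_mem_coeffIdeal hy)

/-- The increasing sequence `k ↦ I ^ (m - k)`, constantly `⊤` from `k = m` on. -/
def descendingPowers (I : Ideal S) (m : ℕ) : ℕ →o Ideal S where
  toFun k := I ^ (m - k)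
  monotone' _ _ h := Ideal.pow_le_pow_right (Nat.sub_le_sub_left h m)

lemma descendingPowers_apply (I : Ideal S) (m k : ℕ) : descendingPowers I m k = I ^ (m - k) := rfl

lemma stepIdeals_descendingPowers (I : Ideal S) (m : ℕ) :
    stepIdeals I (descendingPowers I m) = descendingPowers I (m + 1) := by
  ext1
  funext k
  cases k with
  | zero => exact (pow_succ' I m).symm
  | succ k =>
    change I * I ^ (m - (k + 1)) ⊔ I ^ (m - k) = I ^ (m + 1 - (k + 1))
    rw [← pow_succ', Nat.add_sub_add_right, sup_eq_right]
    exact Ideal.pow_le_pow_right (by omega)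

lemma span_X_sup_map_C_pow (I : Ideal S) (m : ℕ) :
    (Ideal.span {Polynomial.X} ⊔ I.map Polynomial.C) ^ m = coeffIdeal (descendingPowers I m) := by
  induction m with
  | zero =>
    refine (Ideal.one_eq_top.trans (Eq.symm ((Ideal.eq_top_iff_one _).mpr fun k ↦ ?_)))
    rw [descendingPowers_apply, Nat.zero_sub, pow_zero, Ideal.one_eq_top]
    exact Submodule.mem_top
  | succ m ih =>
    rw [pow_succ', ih, span_X_sup_map_C_mul_coeffIdeal, stepIdeals_descendingPowers]

theorem relFinrank_coeffIdeal {K : Type*} [Field K] [Algebra K S] (a b : ℕ →o Ideal S) (n : ℕ)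
    (hab : ∀ k, n ≤ k → a k ≤ b k)
    (hfin : ∀ k < n, Module.Finite K
      ((a k).restrictScalars K ⧸ ((b k).restrictScalars K).submoduleOf _)) :
    relFinrank ((coeffIdeal a).restrictScalars K) ((coeffIdeal b).restrictScalars K) =
      ∑ k ∈ Finset.range n, relFinrank ((a k).restrictScalars K) ((b k).restrictScalars K) := by
  rw [← Fin.sum_univ_eq_sum_range]
  have (k : Fin n) := hfin k k.2
  refine relFinrank_eq_sum (fun k : Fin n ↦ (a k).restrictScalars K)
    (fun k : Fin n ↦ (b k).restrictScalars K)
    (fun k ↦ (Polynomial.lcoeff S k).restrictScalars K)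
    (fun f hf k ↦ hf k) (fun c hc ↦ ?_) (fun f hf ↦ ⟨fun h k ↦ h k, fun h k ↦ ?_⟩)
  · refine ⟨∑ k : Fin n, Polynomial.monomial (k : ℕ) (c k),
      sum_mem fun k _ ↦ monomial_mem_coeffIdeal (hc k), fun k ↦ ?_⟩
    simp [Polynomial.coeff_monomial, Fin.val_inj]
  · rcases lt_or_ge k n with hk | hk
    · exact h ⟨k, hk⟩
    · exact hab k hk (hf k)

end CoeffIdeal

section PointIdeal

variable {K σ : Type*} [CommRing K]

/-- Restriction of polynomial functions to the line through the origin and `p`, parametrised by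
`t ↦ t • p`. -/
noncomputable def lineRestriction (p : σ → K) : MvPolynomial σ K →ₐ[K] Polynomial K :=
  aeval fun j ↦ Polynomial.C (p j) * Polynomial.X

lemma lineRestriction_X (p : σ → K) (j : σ) :
    lineRestriction p (X j) = Polynomial.C (p j) * Polynomial.X :=
  aeval_X _ j

lemma coeff_lineRestriction (p : σ → K) (f : MvPolynomial σ K) (n : ℕ) :
    (lineRestriction p f).coeff n = eval p (homogeneousComponent n f) := by
  induction f using MvPolynomial.induction_on' with
  | monomial u a =>
    have huniform : lineRestriction p (monomial u a) =
        Polynomial.monomial u.degree (eval p (monomial u a)) := by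
      simp [lineRestriction, aeval_monomial, eval_monomial, mul_pow, Finset.prod_mul_distrib,
        ← Polynomial.C_mul_X_pow_eq_monomial, Finsupp.prod, Finset.prod_pow_eq_pow_sum,
        Finsupp.degree_apply, mul_assoc]
    rw [huniform, Polynomial.coeff_monomial,
      homogeneousComponent_of_mem (isHomogeneous_monomial a rfl)]
    simp only [eq_comm (a := n), apply_ite (eval p), map_zero]
  | add f g hf hg => simp only [map_add, Polynomial.coeff_add, hf, hg]

/-- The homogeneous ideal of the point with homogeneous coordinates `p`, encoded as the ideal of
the polynomials whose restriction to the line `K • p` is the zero polynomial in the parameter; this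
differs from vanishing at all points of the line when `K` is finite. For `p = 0` it is the
irrelevant ideal. -/
noncomputable def pointIdeal (p : σ → K) : Ideal (MvPolynomial σ K) :=
  RingHom.ker (lineRestriction p)

lemma mem_pointIdeal {p : σ → K} {f : MvPolynomial σ K} :
    f ∈ pointIdeal p ↔ ∀ n, eval p (homogeneousComponent n f) = 0 := by
  simp only [pointIdeal, RingHom.mem_ker, Polynomial.ext_iff, coeff_lineRestriction,
    Polynomial.coeff_zero]

lemma mem_pointIdeal_iff_of_isHomogeneous {p : σ → K} {f : MvPolynomial σ K} {d : ℕ}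
    (hf : f.IsHomogeneous d) : f ∈ pointIdeal p ↔ eval p f = 0 := by
  simp only [mem_pointIdeal, homogeneousComponent_of_mem hf, apply_ite (eval p), map_zero,
    ite_eq_right_iff, forall_eq]

lemma pointIdeal_le_of_forall_sub_mem {p : σ → K} {I : Ideal (MvPolynomial σ K)}
    (s : MvPolynomial σ K) (hs : ∀ j, X j - C (p j) * s ∈ I) : pointIdeal p ≤ I := by
  have hfactor : Ideal.Quotient.mkₐ K I =
      ((Ideal.Quotient.mkₐ K I).comp (Polynomial.aeval s)).comp (lineRestriction p) := by
    ext j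
    have himage : Polynomial.aeval s (lineRestriction p (X j)) = C (p j) * s := by
      simp [lineRestriction_X, algebraMap_eq]
    rw [AlgHom.comp_apply, AlgHom.comp_apply, himage]
    exact Ideal.Quotient.eq.mpr (hs j)
  intro f hf
  rw [← Ideal.Quotient.eq_zero_iff_mem, ← Ideal.Quotient.mkₐ_eq_mk K, hfactor, AlgHom.comp_apply,
    RingHom.mem_ker.mp hf, map_zero]

lemma pointIdeal_zero : pointIdeal (0 : σ → K) = idealOfVars σ K := by
  apply le_antisymm
  · refine pointIdeal_le_of_forall_sub_mem 0 fun j ↦ ?_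
    rw [mul_zero, sub_zero]
    exact Ideal.subset_span ⟨j, rfl⟩
  · rw [idealOfVars, Ideal.span_le]
    rintro _ ⟨j, rfl⟩
    simp [pointIdeal, lineRestriction_X]

lemma map_ker_comp_equiv {A B D : Type*} [CommRing A] [CommRing B] [CommRing D] [Algebra K A]
    [Algebra K B] [Algebra K D] (e : A ≃ₐ[K] B) (ψ : B →ₐ[K] D) :
    (RingHom.ker (ψ.comp (e : A →ₐ[K] B))).map e = RingHom.ker ψ :=
  Ideal.map_comap_of_surjective e e.surjective (RingHom.ker ψ)

lemma map_pointIdeal_cons_zero {n : ℕ} (q : Fin n → K) :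
    (pointIdeal (Fin.cons 0 q : Fin (n + 1) → K)).map (finSuccEquiv K n) =
      Ideal.span {Polynomial.X} ⊔ (pointIdeal q).map Polynomial.C := by
  let atZero : Polynomial (MvPolynomial (Fin n) K) →ₐ[K] MvPolynomial (Fin n) K :=
    (Polynomial.aeval 0).restrictScalars K
  have hcomp : lineRestriction (Fin.cons 0 q : Fin (n + 1) → K) =
      ((lineRestriction q).comp atZero).comp (finSuccEquiv K n : _ →ₐ[K] _) := by
    ext j : 1
    refine Fin.cases ?_ (fun j ↦ ?_) j <;>
      simp [lineRestriction_X, finSuccEquiv_X_succ, finSuccEquiv_X_zero, atZero]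
  rw [pointIdeal, hcomp, map_ker_comp_equiv, span_X_sup_map_C_eq_comap]
  ext f
  simp [pointIdeal, atZero, Polynomial.coeff_zero_eq_aeval_zero]

lemma map_idealOfVars_finSuccEquiv (n : ℕ) :
    (idealOfVars (Fin (n + 1)) K).map (finSuccEquiv K n) =
      Ideal.span {Polynomial.X} ⊔ (idealOfVars (Fin n) K).map Polynomial.C := by
  have hcons : (0 : Fin (n + 1) → K) = Fin.cons 0 0 := Matrix.cons_zero_zero.symm
  rw [← pointIdeal_zero, hcons, map_pointIdeal_cons_zero, pointIdeal_zero]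

lemma map_pointIdeal_cons_one_zero (n : ℕ) :
    (pointIdeal (Fin.cons 1 0 : Fin (n + 1) → K)).map (finSuccEquiv K n) =
      (idealOfVars (Fin n) K).map Polynomial.C := by
  have hcomp : lineRestriction (Fin.cons 1 0 : Fin (n + 1) → K) =
      (Polynomial.mapAlgHom (aeval (0 : Fin n → K))).comp (finSuccEquiv K n : _ →ₐ[K] _) := by
    ext j : 1
    refine Fin.cases ?_ (fun j ↦ ?_) j <;>
      simp [lineRestriction_X, finSuccEquiv_X_succ, finSuccEquiv_X_zero]
  rw [pointIdeal, hcomp, map_ker_comp_equiv, ← pointIdeal_zero]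
  ext f
  simp [Ideal.mem_map_C_iff, pointIdeal, lineRestriction,
    Polynomial.ext_iff (p := Polynomial.map _ f)]

end PointIdeal

section IrrelevantPowers

variable {K σ : Type*} [CommRing K]

lemma mem_idealOfVars_pow_iff_homogeneousComponent {f : MvPolynomial σ K} {n : ℕ} :
    f ∈ idealOfVars σ K ^ n ↔ ∀ d < n, homogeneousComponent d f = 0 := by
  rw [mem_pow_idealOfVars_iff']
  refine ⟨fun h d hd ↦ ?_, fun h u hu ↦ ?_⟩
  · ext u
    rw [coeff_homogeneousComponent, coeff_zero]
    split_ifs with hu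
    · exact h u (hu ▸ hd)
    · rfl
  · simpa [coeff_homogeneousComponent] using congrArg (coeff u) (h _ hu)

lemma mem_idealOfVars_pow_of_isHomogeneous {f : MvPolynomial σ K} {n d : ℕ}
    (hf : f.IsHomogeneous d) (hnd : n ≤ d) : f ∈ idealOfVars σ K ^ n := by
  rw [mem_pow_idealOfVars_iff']
  exact fun u hu ↦ hf.coeff_eq_zero (by omega)

lemma le_of_mem_idealOfVars_pow_of_isHomogeneous {f : MvPolynomial σ K} {n d : ℕ}
    (hmem : f ∈ idealOfVars σ K ^ n) (hf : f.IsHomogeneous d) (hf0 : f ≠ 0) : n ≤ d := by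
  contrapose! hf0
  rw [← homogeneousComponent_eq_self hf]
  exact mem_idealOfVars_pow_iff_homogeneousComponent.mp hmem d hf0

lemma sub_homogeneousComponent_mem_idealOfVars_pow {f : MvPolynomial σ K} {n : ℕ}
    (hf : f ∈ idealOfVars σ K ^ n) :
    f - homogeneousComponent n f ∈ idealOfVars σ K ^ (n + 1) := by
  rw [mem_pow_idealOfVars_iff'] at hf ⊢
  intro u hu
  rw [coeff_sub, coeff_homogeneousComponent]
  split_ifs with h
  · exact sub_self _
  · rw [hf u (by omega), sub_zero]

lemma homogeneousComponent_mul_of_isHomogeneous {F : MvPolynomial σ K} {a : ℕ}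
    (hF : F.IsHomogeneous a) (d : ℕ) (g : MvPolynomial σ K) :
    homogeneousComponent (a + d) (F * g) = F * homogeneousComponent d g := by
  have hsummand (i : ℕ) : homogeneousComponent (a + d) (F * homogeneousComponent i g) =
      if i = d then F * homogeneousComponent i g else 0 := by
    rw [homogeneousComponent_of_mem (hF.mul (homogeneousComponent_isHomogeneous i g))]
    simp only [Nat.add_left_cancel_iff, eq_comm]
  conv_lhs => rw [← sum_homogeneousComponent g, Finset.mul_sum, map_sum]
  simp only [hsummand, Finset.sum_ite_eq', Finset.mem_range]
  split_ifs with hd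
  · rfl
  · rw [homogeneousComponent_eq_zero _ _ (by omega), mul_zero]

lemma mul_mem_idealOfVars_pow_iff [IsDomain K] {F g : MvPolynomial σ K} {a n : ℕ}
    (hF : F.IsHomogeneous a) (hF0 : F ≠ 0) :
    F * g ∈ idealOfVars σ K ^ n ↔ g ∈ idealOfVars σ K ^ (n - a) := by
  refine ⟨fun h ↦ ?_, fun h ↦ ?_⟩
  · rw [mem_idealOfVars_pow_iff_homogeneousComponent] at h ⊢
    intro d hd
    have hcomp := h (a + d) (by omega)
    rw [homogeneousComponent_mul_of_isHomogeneous hF] at hcomp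
    exact (mul_eq_zero.mp hcomp).resolve_left hF0
  · refine Ideal.pow_le_pow_right (show n ≤ a + (n - a) by omega) ?_
    rw [pow_add]
    exact Ideal.mul_mem_mul (mem_idealOfVars_pow_of_isHomogeneous hF le_rfl) h

lemma span_singleton_inf_idealOfVars_pow [IsDomain K] {F : MvPolynomial σ K} {a : ℕ}
    (hF : F.IsHomogeneous a) (hF0 : F ≠ 0) (n : ℕ) :
    Ideal.span {F} ⊓ idealOfVars σ K ^ n = Ideal.span {F} * idealOfVars σ K ^ (n - a) := by
  ext f
  rw [Ideal.mem_inf, Ideal.mem_span_singleton', Ideal.mem_span_singleton_mul]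
  constructor
  · rintro ⟨⟨g, rfl⟩, hg⟩
    rw [mul_comm, mul_mem_idealOfVars_pow_iff hF hF0] at hg
    exact ⟨g, hg, mul_comm F g⟩
  · rintro ⟨g, hg, rfl⟩
    exact ⟨⟨g, mul_comm g F⟩, (mul_mem_idealOfVars_pow_iff hF hF0).mpr hg⟩

lemma relFinrank_top_idealOfVars (K σ : Type*) [Field K] :
    relFinrank ((⊤ : Ideal (MvPolynomial σ K)).restrictScalars K)
      ((idealOfVars σ K).restrictScalars K) = 1 := by
  let φ : (⊤ : Ideal (MvPolynomial σ K)).restrictScalars K →ₗ[K] K :=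
    (aeval (0 : σ → K)).toLinearMap ∘ₗ Submodule.subtype _
  have hφ : Function.Surjective φ := fun c ↦ ⟨⟨C c, Submodule.mem_top⟩, aeval_C _ c⟩
  have hker : LinearMap.ker φ = ((idealOfVars σ K).restrictScalars K).submoduleOf _ := by
    ext ⟨f, hf⟩
    change aeval 0 f = 0 ↔ f ∈ idealOfVars σ K
    rw [← pow_one (idealOfVars σ K), mem_idealOfVars_pow_iff_homogeneousComponent]
    simp [homogeneousComponent_zero, constantCoeff_eq]
  rw [relFinrank_eq_of_surjective φ hφ hker, Module.finrank_self]

lemma homogeneousComponent_mem_span_singleton_iff [IsDomain K] {F f : MvPolynomial σ K} {a e : ℕ}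
    (hF : F.IsHomogeneous a) (hF0 : F ≠ 0) (hae : a ≤ e) (hf : f ∈ idealOfVars σ K ^ e) :
    homogeneousComponent e f ∈ Ideal.span {F} ↔
      f ∈ idealOfVars σ K ^ (e + 1) ⊔ Ideal.span {F} * idealOfVars σ K ^ (e - a) := by
  rw [← span_singleton_inf_idealOfVars_pow hF hF0, Submodule.mem_sup]
  constructor
  · intro h
    exact ⟨_, sub_homogeneousComponent_mem_idealOfVars_pow hf, homogeneousComponent e f,
      ⟨h, mem_idealOfVars_pow_of_isHomogeneous (homogeneousComponent_isHomogeneous e f) le_rfl⟩,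
      sub_add_cancel _ _⟩
  · rintro ⟨u, hu, v, ⟨hv, -⟩, rfl⟩
    obtain ⟨g, rfl⟩ := Ideal.mem_span_singleton.mp hv
    rw [map_add, mem_idealOfVars_pow_iff_homogeneousComponent.mp hu e e.lt_succ_self, zero_add,
      ← Nat.add_sub_of_le hae, homogeneousComponent_mul_of_isHomogeneous hF]
    exact Ideal.mul_mem_right _ _ (Ideal.mem_span_singleton_self F)

end IrrelevantPowers

section PointForm

variable {K : Type*} [Field K]

/-- The linear form in two variables whose zeros, for `q ≠ 0`, are the multiples of `q`. -/
noncomputable def pointForm (q : Fin 2 → K) : MvPolynomial (Fin 2) K :=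
  C (q 1) * X 0 - C (q 0) * X 1

lemma isHomogeneous_pointForm (q : Fin 2 → K) : (pointForm q).IsHomogeneous 1 :=
  (isHomogeneous_C_mul_X _ _).sub (isHomogeneous_C_mul_X _ _)

lemma eval_pointForm (q r : Fin 2 → K) : eval r (pointForm q) = q 1 * r 0 - q 0 * r 1 := by
  simp [pointForm]

lemma eval_pointForm_self (q : Fin 2 → K) : eval q (pointForm q) = 0 := by
  rw [eval_pointForm]
  ring

lemma exists_linear_combination_eq_one {q : Fin 2 → K} (hq : q ≠ 0) :
    ∃ c d, c * q 0 + d * q 1 = 1 := by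
  obtain ⟨j, hj⟩ := Function.ne_iff.mp hq
  fin_cases j
  · exact ⟨(q 0)⁻¹, 0, by simpa using inv_mul_cancel₀ hj⟩
  · exact ⟨0, (q 1)⁻¹, by simpa using inv_mul_cancel₀ hj⟩

lemma exists_smul_eq_of_eval_pointForm_eq_zero {q r : Fin 2 → K} (hq : q ≠ 0)
    (h : eval r (pointForm q) = 0) : ∃ c : K, c • q = r := by
  obtain ⟨c, d, hcd⟩ := exists_linear_combination_eq_one hq
  rw [eval_pointForm] at h
  refine ⟨c * r 0 + d * r 1, ?_⟩
  ext j
  fin_cases j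
  · simp only [Fin.zero_eta, Pi.smul_apply, smul_eq_mul]
    linear_combination r 0 * hcd - d * h
  · simp only [Fin.mk_one, Pi.smul_apply, smul_eq_mul]
    linear_combination r 1 * hcd + c * h

lemma pointIdeal_eq_span_pointForm {q : Fin 2 → K} (hq : q ≠ 0) :
    pointIdeal q = Ideal.span {pointForm q} := by
  apply le_antisymm
  · obtain ⟨c, d, hcd⟩ := exists_linear_combination_eq_one hq
    have hC : (C c * C (q 0) + C d * C (q 1) : MvPolynomial (Fin 2) K) = 1 := by
      rw [← C_mul, ← C_mul, ← C_add, hcd, C_1]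
    refine pointIdeal_le_of_forall_sub_mem (C c * X 0 + C d * X 1) fun j ↦ ?_
    rw [Ideal.mem_span_singleton, pointForm]
    fin_cases j
    · refine ⟨C d, ?_⟩
      simp only [Fin.zero_eta]
      linear_combination -X 0 * hC
    · refine ⟨-C c, ?_⟩
      simp only [Fin.mk_one]
      linear_combination -X 1 * hC
  · rw [Ideal.span_singleton_le_iff_mem,
      mem_pointIdeal_iff_of_isHomogeneous (isHomogeneous_pointForm q)]
    exact eval_pointForm_self q

lemma pointForm_ne_zero {q : Fin 2 → K} (hq : q ≠ 0) : pointForm q ≠ 0 := by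
  intro h
  have hzero (r : Fin 2 → K) : q 1 * r 0 - q 0 * r 1 = 0 := by
    rw [← eval_pointForm, h, map_zero]
  apply hq
  ext j
  fin_cases j
  · simpa using hzero ![0, 1]
  · simpa using hzero ![1, 0]

lemma irreducible_pointForm {q : Fin 2 → K} (hq : q ≠ 0) : Irreducible (pointForm q) := by
  refine irreducible_of_totalDegree_eq_one
    ((isHomogeneous_pointForm q).totalDegree (pointForm_ne_zero hq)) fun c hc ↦ ?_
  rw [isUnit_iff_ne_zero]
  rintro rfl
  exact pointForm_ne_zero hq (MvPolynomial.ext _ _ fun u ↦ zero_dvd_iff.mp (hc u))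

lemma isRelPrime_pointForm {q r : Fin 2 → K} (hqr : eval r (pointForm q) ≠ 0) :
    IsRelPrime (pointForm q) (pointForm r) := by
  have hq : q ≠ 0 := by
    rintro rfl
    simp [eval_pointForm] at hqr
  rw [(irreducible_pointForm hq).isRelPrime_iff_not_dvd]
  rintro ⟨g, hg⟩
  have hrq : eval q (pointForm r) = 0 := by
    rw [hg, map_mul, eval_pointForm_self, zero_mul]
  rw [eval_pointForm] at hqr hrq
  exact hqr (by linear_combination -hrq)

end PointForm

lemma iInf_span_singleton_pow_of_isRelPrime {R ι : Type*} [CommRing R] [DecompositionMonoid R]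
    [Fintype ι] {f : ι → R} (hf : Pairwise fun i j ↦ IsRelPrime (f i) (f j)) (n : ℕ) :
    ⨅ i, Ideal.span {f i} ^ n = Ideal.span {(∏ i, f i) ^ n} := by
  ext x
  simp only [Ideal.mem_iInf, Ideal.span_singleton_pow, Ideal.mem_span_singleton]
  refine ⟨fun h ↦ ?_, fun h i ↦ ?_⟩
  · rw [← Finset.prod_pow]
    exact Fintype.prod_dvd_of_isRelPrime (fun i j hij ↦ (hf hij).pow) h
  · exact (pow_dvd_pow_of_dvd (Finset.dvd_prod_of_mem f (Finset.mem_univ i)) n).trans h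

section PointsForm

variable {K ι : Type*} [Field K] [Fintype ι] {q : ι → Fin 2 → K}

/-- The binary form whose zeros are the points `q i`, of degree the number of points. -/
noncomputable def pointsForm (q : ι → Fin 2 → K) : MvPolynomial (Fin 2) K :=
  ∏ i, pointForm (q i)

lemma isHomogeneous_pointsForm (q : ι → Fin 2 → K) :
    (pointsForm q).IsHomogeneous (Fintype.card ι) := by
  simpa [pointsForm] using IsHomogeneous.prod Finset.univ (fun i ↦ pointForm (q i)) (fun _ ↦ 1)
    fun i _ ↦ isHomogeneous_pointForm (q i)

lemma pointsForm_ne_zero (hq : ∀ i, q i ≠ 0) : pointsForm q ≠ 0 :=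
  Finset.prod_ne_zero_iff.mpr fun i _ ↦ pointForm_ne_zero (hq i)

lemma iInf_pointIdeal_pow (hq : ∀ i, q i ≠ 0)
    (hdist : Pairwise fun i j ↦ eval (q j) (pointForm (q i)) ≠ 0) (n : ℕ) :
    ⨅ i, pointIdeal (q i) ^ n = Ideal.span {pointsForm q ^ n} := by
  simp only [pointIdeal_eq_span_pointForm (hq _)]
  exact iInf_span_singleton_pow_of_isRelPrime (fun i j hij ↦ isRelPrime_pointForm (hdist hij)) n

lemma mem_span_pointsForm_iff (hq : ∀ i, q i ≠ 0)
    (hdist : Pairwise fun i j ↦ eval (q j) (pointForm (q i)) ≠ 0) {f : MvPolynomial (Fin 2) K}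
    {d : ℕ} (hf : f.IsHomogeneous d) :
    f ∈ Ideal.span {pointsForm q} ↔ ∀ i, eval (q i) f = 0 := by
  have hinf := iInf_pointIdeal_pow hq hdist 1
  simp only [pow_one] at hinf
  simp only [← hinf, Ideal.mem_iInf, mem_pointIdeal_iff_of_isHomogeneous hf]

lemma exists_isHomogeneous_eval_eq_single [DecidableEq ι] (hq : ∀ i, q i ≠ 0)
    (hdist : Pairwise fun i j ↦ eval (q j) (pointForm (q i)) ≠ 0) {e : ℕ}
    (he : Fintype.card ι ≤ e + 1) (i : ι) :
    ∃ h : MvPolynomial (Fin 2) K, h.IsHomogeneous e ∧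
      ∀ j, eval (q j) h = (Pi.single i 1 : ι → K) j := by
  obtain ⟨c, d, hcd⟩ := exists_linear_combination_eq_one (hq i)
  let s : MvPolynomial (Fin 2) K := C c * X 0 + C d * X 1
  let A := ∏ j ∈ Finset.univ.erase i, pointForm (q j)
  have hs : s.IsHomogeneous 1 := (isHomogeneous_C_mul_X c 0).add (isHomogeneous_C_mul_X d 1)
  have hA : A.IsHomogeneous (Fintype.card ι - 1) := by
    simpa using IsHomogeneous.prod (Finset.univ.erase i) (fun j ↦ pointForm (q j)) (fun _ ↦ 1)
      fun j _ ↦ isHomogeneous_pointForm (q j)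
  have hAi : eval (q i) A ≠ 0 := by
    rw [map_prod, Finset.prod_ne_zero_iff]
    exact fun j hj ↦ hdist (Finset.ne_of_mem_erase hj)
  refine ⟨C (eval (q i) A)⁻¹ * (A * s ^ (e - (Fintype.card ι - 1))), ?_, fun j ↦ ?_⟩
  · convert (hA.mul (hs.pow (e - (Fintype.card ι - 1)))).C_mul _ using 1
    omega
  · rcases eq_or_ne j i with rfl | hji
    · simp [s, hcd, hAi]
    · have hAj : eval (q j) A = 0 := by
        rw [map_prod]
        exact Finset.prod_eq_zero (Finset.mem_erase.mpr ⟨hji, Finset.mem_univ j⟩)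
          (eval_pointForm_self _)
      simp [hAj, hji]

theorem exists_isHomogeneous_eval_eq (hq : ∀ i, q i ≠ 0)
    (hdist : Pairwise fun i j ↦ eval (q j) (pointForm (q i)) ≠ 0) {e : ℕ}
    (he : Fintype.card ι ≤ e + 1) (v : ι → K) :
    ∃ h : MvPolynomial (Fin 2) K, h.IsHomogeneous e ∧ ∀ i, eval (q i) h = v i := by
  classical
  choose h hh heval using exists_isHomogeneous_eval_eq_single hq hdist he
  exact ⟨∑ i, C (v i) * h i, IsHomogeneous.sum _ _ _ fun i _ ↦ (hh i).C_mul _,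
    fun i ↦ by simp [heval, Pi.single_apply]⟩

theorem relFinrank_idealOfVars_pow (hq : ∀ i, q i ≠ 0)
    (hdist : Pairwise fun i j ↦ eval (q j) (pointForm (q i)) ≠ 0) {e : ℕ}
    (he : Fintype.card ι ≤ e) :
    relFinrank ((idealOfVars (Fin 2) K ^ e).restrictScalars K)
      ((idealOfVars (Fin 2) K ^ (e + 1) ⊔ Ideal.span {pointsForm q} *
        idealOfVars (Fin 2) K ^ (e - Fintype.card ι)).restrictScalars K) = Fintype.card ι := by
  let φ : (idealOfVars (Fin 2) K ^ e).restrictScalars K →ₗ[K] ι → K :=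
    LinearMap.pi fun i ↦ (aeval (q i)).toLinearMap ∘ₗ homogeneousComponent e ∘ₗ
      Submodule.subtype _
  have hφ : Function.Surjective φ := by
    intro v
    obtain ⟨h, hh, heval⟩ := exists_isHomogeneous_eval_eq hq hdist (he.trans e.le_succ) v
    refine ⟨⟨h, mem_idealOfVars_pow_of_isHomogeneous hh le_rfl⟩, funext fun i ↦ ?_⟩
    change eval (q i) (homogeneousComponent e h) = v i
    rw [homogeneousComponent_eq_self hh, heval]
  refine (relFinrank_eq_of_surjective φ hφ ?_).trans (Module.finrank_fintype_fun_eq_card K)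
  ext ⟨f, hf⟩
  exact (LinearMap.mem_ker.trans _root_.funext_iff).trans <|
    (mem_span_pointsForm_iff hq hdist (homogeneousComponent_isHomogeneous e f)).symm.trans <|
    homogeneousComponent_mem_span_singleton_iff (isHomogeneous_pointsForm q)
      (pointsForm_ne_zero hq) he hf

end PointsForm

section FatPointCoeffs

variable {K ι : Type*} [CommRing K]

/-- The coefficient ideals, with respect to the first variable, of the uniform fat point ideal of
multiplicity `m` supported at the points `(0 : q i)` and at the point `(1 : 0 : 0)`. -/
noncomputable def fatPointCoeffs (q : ι → Fin 2 → K) (m : ℕ) :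
    ℕ →o Ideal (MvPolynomial (Fin 2) K) :=
  (⨅ i, descendingPowers (pointIdeal (q i)) m) ⊓ OrderHom.const ℕ (idealOfVars (Fin 2) K ^ m)

lemma coeffIdeal_fatPointCoeffs (q : ι → Fin 2 → K) (m : ℕ) :
    coeffIdeal (fatPointCoeffs q m) =
      (⨅ i, (Ideal.span {Polynomial.X} ⊔ (pointIdeal (q i)).map Polynomial.C) ^ m) ⊓
        (idealOfVars (Fin 2) K).map Polynomial.C ^ m := by
  rw [fatPointCoeffs, coeffIdeal_inf, coeffIdeal_iInf, ← Ideal.map_pow,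
    map_C_eq_coeffIdeal (idealOfVars (Fin 2) K ^ m)]
  simp only [span_X_sup_map_C_pow]

lemma fatPointCoeffs_apply (q : ι → Fin 2 → K) (m k : ℕ) :
    fatPointCoeffs q m k = (⨅ i, pointIdeal (q i) ^ (m - k)) ⊓ idealOfVars (Fin 2) K ^ m := by
  change (⨅ i, descendingPowers (pointIdeal (q i)) m) k ⊓ idealOfVars (Fin 2) K ^ m = _
  simp only [OrderHom.iInf_apply, descendingPowers_apply]

lemma fatPointCoeffs_le_stepIdeals (q : ι → Fin 2 → K) {m k : ℕ} (hmk : m < k) :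
    fatPointCoeffs q m k ≤ stepIdeals (idealOfVars (Fin 2) K) (fatPointCoeffs q m) k := by
  obtain ⟨k, rfl⟩ := Nat.exists_eq_add_one_of_ne_zero (Nat.ne_zero_of_lt hmk)
  rw [stepIdeals_succ]
  refine le_sup_of_le_right (le_of_eq ?_)
  rw [fatPointCoeffs_apply, fatPointCoeffs_apply, Nat.sub_eq_zero_of_le hmk.le,
    Nat.sub_eq_zero_of_le (Nat.le_of_lt_succ hmk)]

end FatPointCoeffs

section FatPointRank

variable {K ι : Type*} [Field K] [Fintype ι] {q : ι → Fin 2 → K} (hq : ∀ i, q i ≠ 0)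
  (hdist : Pairwise fun i j ↦ eval (q j) (pointForm (q i)) ≠ 0)
include hq hdist

lemma fatPointCoeffs_eq_mul (m k : ℕ) :
    fatPointCoeffs q m k = Ideal.span {pointsForm q ^ (m - k)} *
      idealOfVars (Fin 2) K ^ (m - Fintype.card ι * (m - k)) := by
  rw [fatPointCoeffs_apply, iInf_pointIdeal_pow hq hdist, span_singleton_inf_idealOfVars_pow
    ((isHomogeneous_pointsForm q).pow _) (pow_ne_zero _ (pointsForm_ne_zero hq))]

lemma fatPointCoeffs_pred {m k : ℕ} (hkm : k < m) :
    fatPointCoeffs q m k = Ideal.span {pointsForm q ^ (m - (k + 1))} * (Ideal.span {pointsForm q} *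
      idealOfVars (Fin 2) K ^ (m - Fintype.card ι * (m - (k + 1)) - Fintype.card ι)) := by
  have hsub : m - k = m - (k + 1) + 1 := by omega
  rw [fatPointCoeffs_eq_mul hq hdist, ← mul_assoc, Ideal.span_singleton_mul_span_singleton,
    ← pow_succ, hsub, mul_add_one, Nat.sub_sub]

lemma stepIdeals_fatPointCoeffs_succ {m k : ℕ} (hkm : k < m) :
    stepIdeals (idealOfVars (Fin 2) K) (fatPointCoeffs q m) (k + 1) =
      Ideal.span {pointsForm q ^ (m - (k + 1))} *
        (idealOfVars (Fin 2) K ^ (m - Fintype.card ι * (m - (k + 1)) + 1) ⊔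
          Ideal.span {pointsForm q} * idealOfVars (Fin 2) K ^
            (m - Fintype.card ι * (m - (k + 1)) - Fintype.card ι)) := by
  rw [stepIdeals_succ, fatPointCoeffs_pred hq hdist hkm, fatPointCoeffs_eq_mul hq hdist,
    mul_left_comm, ← pow_succ', Ideal.mul_sup]

lemma relFinrank_fatPointCoeffs_of_card_le {m k : ℕ} (hkm : k < m)
    (h : Fintype.card ι ≤ m - Fintype.card ι * (m - (k + 1))) :
    relFinrank ((fatPointCoeffs q m (k + 1)).restrictScalars K)
      ((stepIdeals (idealOfVars (Fin 2) K) (fatPointCoeffs q m) (k + 1)).restrictScalars K) =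
      Fintype.card ι := by
  rw [stepIdeals_fatPointCoeffs_succ hq hdist hkm, fatPointCoeffs_eq_mul hq hdist,
    relFinrank_span_singleton_mul (pow_ne_zero _ (pointsForm_ne_zero hq))]
  exact relFinrank_idealOfVars_pow hq hdist h

lemma stepIdeals_fatPointCoeffs_of_le [Nonempty ι] {m k : ℕ} (hkm : k ≤ m)
    (h : m ≤ Fintype.card ι * (m - k)) :
    stepIdeals (idealOfVars (Fin 2) K) (fatPointCoeffs q m) k =
      Ideal.span {pointsForm q ^ (m - k)} * idealOfVars (Fin 2) K := by
  cases k with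
  | zero =>
    rw [stepIdeals_zero, fatPointCoeffs_eq_mul hq hdist, Nat.sub_eq_zero_of_le h, pow_zero, mul_one,
      mul_comm]
  | succ k =>
    have hmem : pointsForm q ∈ idealOfVars (Fin 2) K ^ 1 :=
      mem_idealOfVars_pow_of_isHomogeneous (isHomogeneous_pointsForm q) Fintype.card_pos
    rw [pow_one] at hmem
    rw [stepIdeals_fatPointCoeffs_succ hq hdist hkm, Nat.sub_eq_zero_of_le h, Nat.zero_sub,
      pow_zero, mul_one, zero_add, pow_one,
      sup_eq_left.mpr ((Ideal.span_singleton_le_iff_mem _).mpr hmem)]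

lemma relFinrank_fatPointCoeffs_of_le [Nonempty ι] {m k : ℕ} (hkm : k ≤ m)
    (h : m ≤ Fintype.card ι * (m - k)) :
    relFinrank ((fatPointCoeffs q m k).restrictScalars K)
      ((stepIdeals (idealOfVars (Fin 2) K) (fatPointCoeffs q m) k).restrictScalars K) = 1 := by
  rw [stepIdeals_fatPointCoeffs_of_le hq hdist hkm h, fatPointCoeffs_eq_mul hq hdist,
    Nat.sub_eq_zero_of_le h, pow_zero,
    relFinrank_span_singleton_mul (pow_ne_zero _ (pointsForm_ne_zero hq)), Ideal.one_eq_top]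
  exact relFinrank_top_idealOfVars K (Fin 2)

lemma relFinrank_fatPointCoeffs [Nonempty ι] {n k : ℕ} (hk : k ≤ Fintype.card ι * n) :
    relFinrank ((fatPointCoeffs q (Fintype.card ι * n) k).restrictScalars K)
      ((stepIdeals (idealOfVars (Fin 2) K)
        (fatPointCoeffs q (Fintype.card ι * n)) k).restrictScalars K) =
      if Fintype.card ι * n - k < n then Fintype.card ι else 1 := by
  have hcard : 0 < Fintype.card ι := Fintype.card_pos
  split_ifs with hn
  · obtain ⟨k, rfl⟩ : ∃ j, k = j + 1 := by
      refine Nat.exists_eq_add_one_of_ne_zero ?_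
      rintro rfl
      exact absurd hn (not_lt.mpr (Nat.le_mul_of_pos_left n hcard))
    refine relFinrank_fatPointCoeffs_of_card_le hq hdist hk (Nat.le_sub_of_add_le ?_)
    rw [add_comm, ← mul_add_one]
    exact Nat.mul_le_mul_left _ hn
  · exact relFinrank_fatPointCoeffs_of_le hq hdist hk (Nat.mul_le_mul_left _ (not_lt.mp hn))

theorem relFinrank_coeffIdeal_fatPointCoeffs [Nonempty ι] (n : ℕ) :
    relFinrank ((coeffIdeal (fatPointCoeffs q (Fintype.card ι * n))).restrictScalars K)
      (((Ideal.span {Polynomial.X} ⊔ (idealOfVars (Fin 2) K).map Polynomial.C) *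
        coeffIdeal (fatPointCoeffs q (Fintype.card ι * n))).restrictScalars K) =
      2 * (Fintype.card ι * n) - n + 1 := by
  set m := Fintype.card ι * n with hm
  have hcard : 0 < Fintype.card ι := Fintype.card_pos
  have hnm : n ≤ m := Nat.le_mul_of_pos_left n hcard
  have hrank {k : ℕ} (hk : k < m + 1) := relFinrank_fatPointCoeffs hq hdist (Nat.le_of_lt_succ hk)
  rw [span_X_sup_map_C_mul_coeffIdeal, relFinrank_coeffIdeal _ _ (m + 1)
    fun k hk ↦ fatPointCoeffs_le_stepIdeals q hk]
  · calc ∑ k ∈ Finset.range (m + 1), _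
        = ∑ k ∈ Finset.range (m + 1), if m - k < n then Fintype.card ι else 1 :=
          Finset.sum_congr rfl fun k hk ↦ hrank (Finset.mem_range.mp hk)
      _ = ∑ j ∈ Finset.range (m + 1), if j < n then Fintype.card ι else 1 :=
          Finset.sum_range_reflect (fun j ↦ if j < n then Fintype.card ι else 1) (m + 1)
      _ = n * Fintype.card ι + (m + 1 - n) := by
          rw [← Finset.sum_range_add_sum_Ico _ (hnm.trans m.le_succ)]
          have hlow : ∀ j ∈ Finset.range n,
              (if j < n then Fintype.card ι else 1) = Fintype.card ι :=
            fun j hj ↦ if_pos (Finset.mem_range.mp hj)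
          have hhigh : ∀ j ∈ Finset.Ico n (m + 1), (if j < n then Fintype.card ι else 1) = 1 :=
            fun j hj ↦ if_neg (not_lt.mpr (Finset.mem_Ico.mp hj).1)
          simp only [Finset.sum_congr rfl hlow, Finset.sum_congr rfl hhigh, Finset.sum_const,
            Finset.card_range, Nat.card_Ico, smul_eq_mul, mul_one]
      _ = 2 * m - n + 1 := by
          rw [mul_comm, ← hm]
          omega
  · intro k hk
    apply Module.finite_of_finrank_pos
    change 0 < relFinrank _ _
    rw [hrank hk]
    split_ifs <;> positivity

end FatPointRank

lemma lineRestriction_toMvPolynomial {K σ : Type*} [CommRing K] [Fintype σ] (M : Matrix σ σ K)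
    (p : σ → K) (j : σ) :
    lineRestriction p (M.toMvPolynomial j) = Polynomial.C (M.mulVec p j) * Polynomial.X := by
  ext n
  rw [coeff_lineRestriction, homogeneousComponent_of_mem (M.toMvPolynomial_isHomogeneous j),
    apply_ite (eval p), Matrix.toMvPolynomial_eval_eq_apply, map_zero, Polynomial.coeff_C_mul_X]

section LinearSubst

variable {K σ : Type*} [CommRing K] [Fintype σ] [DecidableEq σ]

/-- The automorphism `f ↦ f ∘ e⁻¹` of the polynomial ring induced by a linear change of coordinates
`e`. -/
noncomputable def linearSubstEquiv (e : (σ → K) ≃ₗ[K] σ → K) :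
    MvPolynomial σ K ≃ₐ[K] MvPolynomial σ K :=
  AlgEquiv.ofAlgHom (bind₁ (LinearMap.toMatrix' e.symm.toLinearMap).toMvPolynomial)
    (bind₁ (LinearMap.toMatrix' e.toLinearMap).toMvPolynomial)
    (algHom_ext fun j ↦ by
      rw [AlgHom.comp_apply, bind₁_X_right, ← Matrix.toMvPolynomial_mul, ← LinearMap.toMatrix'_comp,
        e.comp_symm, LinearMap.toMatrix'_id, Matrix.toMvPolynomial_one, AlgHom.id_apply])
    (algHom_ext fun j ↦ by
      rw [AlgHom.comp_apply, bind₁_X_right, ← Matrix.toMvPolynomial_mul, ← LinearMap.toMatrix'_comp,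
        e.symm_comp, LinearMap.toMatrix'_id, Matrix.toMvPolynomial_one, AlgHom.id_apply])

lemma linearSubstEquiv_apply (e : (σ → K) ≃ₗ[K] σ → K) (f : MvPolynomial σ K) :
    linearSubstEquiv e f = bind₁ (LinearMap.toMatrix' e.symm.toLinearMap).toMvPolynomial f := rfl

lemma linearSubstEquiv_symm (e : (σ → K) ≃ₗ[K] σ → K) :
    (linearSubstEquiv e).symm = linearSubstEquiv e.symm := rfl

lemma isHomogeneous_linearSubstEquiv (e : (σ → K) ≃ₗ[K] σ → K) {f : MvPolynomial σ K} {d : ℕ}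
    (hf : f.IsHomogeneous d) : (linearSubstEquiv e f).IsHomogeneous d := by
  have hsubst := hf.aeval _ (LinearMap.toMatrix' e.symm.toLinearMap).toMvPolynomial_isHomogeneous
  rwa [one_mul] at hsubst

lemma isHomogeneous_linearSubstEquiv_iff (e : (σ → K) ≃ₗ[K] σ → K) {f : MvPolynomial σ K} {d : ℕ} :
    (linearSubstEquiv e f).IsHomogeneous d ↔ f.IsHomogeneous d := by
  refine ⟨fun h ↦ ?_, isHomogeneous_linearSubstEquiv e⟩
  rw [← (linearSubstEquiv e).symm_apply_apply f, linearSubstEquiv_symm]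
  exact isHomogeneous_linearSubstEquiv e.symm h

lemma map_pointIdeal_linearSubstEquiv (e : (σ → K) ≃ₗ[K] σ → K) (p : σ → K) :
    (pointIdeal p).map (linearSubstEquiv e) = pointIdeal (e p) := by
  have hcomp : lineRestriction p =
      (lineRestriction (e p)).comp (linearSubstEquiv e : MvPolynomial σ K →ₐ[K] _) := by
    ext j : 1
    rw [AlgHom.comp_apply, AlgEquiv.toAlgHom_apply, linearSubstEquiv_apply, bind₁_X_right,
      lineRestriction_toMvPolynomial, LinearMap.toMatrix'_mulVec, LinearEquiv.coe_coe,
      e.symm_apply_apply, lineRestriction_X]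
  rw [pointIdeal, hcomp, map_ker_comp_equiv, pointIdeal]

lemma map_idealOfVars_linearSubstEquiv (e : (σ → K) ≃ₗ[K] σ → K) :
    (idealOfVars σ K).map (linearSubstEquiv e) = idealOfVars σ K := by
  rw [← pointIdeal_zero, map_pointIdeal_linearSubstEquiv, map_zero]

end LinearSubst

section Coordinates

variable {K : Type*} [Field K]

lemma exists_linearEquiv_apply_eq_cons {n : ℕ} (φ : (Fin (n + 1) → K) →ₗ[K] K)
    {o : Fin (n + 1) → K} (ho : φ o ≠ 0) :
    ∃ e : (Fin (n + 1) → K) ≃ₗ[K] Fin (n + 1) → K,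
      e o = Fin.cons 1 0 ∧ ∀ v, φ v = 0 → e v 0 = 0 := by
  have hφ : φ ≠ 0 := by
    rintro rfl
    exact ho rfl
  have hker : Module.finrank K (LinearMap.ker φ) = n := by
    have hrank := Module.Dual.finrank_ker_add_one_of_ne_zero hφ
    rw [Module.finrank_fin_fun] at hrank
    exact Nat.add_right_cancel hrank
  let b := Module.finBasisOfFinrankEq K (LinearMap.ker φ) hker
  let B : Module.Basis (Fin (n + 1)) K (Fin (n + 1) → K) := Module.Basis.mkFinCons o b
    (fun c x hx h ↦ by
      have hφc := congrArg φ h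
      rw [map_add, map_smul, LinearMap.mem_ker.mp hx, add_zero, map_zero] at hφc
      exact (smul_eq_zero.mp hφc).resolve_right ho)
    (fun z ↦ ⟨-(φ z / φ o), by simp [ho]⟩)
  have hB : ⇑B = Fin.cons o ((↑) ∘ b) := Module.Basis.coe_mkFinCons o b _ _
  have hB_zero : B 0 = o := by rw [hB, Fin.cons_zero]
  have hB_succ (j : Fin n) : φ (B j.succ) = 0 := by
    rw [hB, Fin.cons_succ]
    exact (b j).2
  have hcoord : φ o • B.coord 0 = φ := by
    refine B.ext (Fin.cases ?_ fun j ↦ ?_)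
    · rw [LinearMap.smul_apply, B.coord_apply, B.repr_self, Finsupp.single_eq_same, smul_eq_mul,
        mul_one, hB_zero]
    · rw [LinearMap.smul_apply, B.coord_apply, B.repr_self, hB_succ,
        Finsupp.single_eq_of_ne (Fin.succ_ne_zero j).symm, smul_zero]
  refine ⟨B.equivFun, ?_, fun v hv ↦ ?_⟩
  · ext j
    rw [← hB_zero, B.equivFun_self]
    refine Fin.cases ?_ (fun j ↦ ?_) j
    · simp
    · simp [(Fin.succ_ne_zero j).symm]
  · have hv0 := LinearMap.congr_fun hcoord v
    rw [hv] at hv0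
    exact (mul_eq_zero.mp hv0).resolve_left ho

theorem exists_linearEquiv_apply_castSucc_eq_cons {l : ℕ} {p : Fin (l + 1) → Fin 3 → K}
    (hp0 : ∀ i, p i ≠ 0) (hdist : ∀ i j, i ≠ j → ∀ c : K, c • p i ≠ p j)
    (φ : (Fin 3 → K) →ₗ[K] K) (hon : ∀ i : Fin l, φ (p i.castSucc) = 0)
    (hoff : φ (p (Fin.last l)) ≠ 0) :
    ∃ (e : (Fin 3 → K) ≃ₗ[K] Fin 3 → K) (q : Fin l → Fin 2 → K),
      (∀ i, e (p i.castSucc) = Fin.cons 0 (q i)) ∧ e (p (Fin.last l)) = Fin.cons 1 0 ∧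
      (∀ i, q i ≠ 0) ∧ Pairwise fun i j ↦ eval (q j) (pointForm (q i)) ≠ 0 := by
  obtain ⟨e, helast, hker⟩ := exists_linearEquiv_apply_eq_cons φ hoff
  let q (i : Fin l) : Fin 2 → K := Fin.tail (e (p i.castSucc))
  have he (i : Fin l) : e (p i.castSucc) = Fin.cons 0 (q i) := by
    rw [← hker _ (hon i), Fin.cons_self_tail]
  have hq (i : Fin l) : q i ≠ 0 := by
    intro hqi
    have hcons := he i
    rw [hqi] at hcons
    exact hp0 _ (e.map_eq_zero_iff.mp (hcons.trans Matrix.cons_zero_zero))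
  refine ⟨e, q, he, helast, hq, fun i j hij hzero ↦ ?_⟩
  obtain ⟨c, hc⟩ := exists_smul_eq_of_eval_pointForm_eq_zero (hq i) hzero
  have hij' : i.castSucc ≠ j.castSucc := (Fin.castSucc_injective l).ne hij
  refine hdist _ _ hij' c (e.injective ?_)
  rw [map_smul, he, he, ← hc]
  ext k
  refine Fin.cases ?_ (fun k ↦ ?_) k <;> simp

end Coordinates

lemma idealOfVars_fin_three {R : Type*} [CommRing R] :
    idealOfVars (Fin 3) R = Ideal.span {X 0, X 1, X 2} := by
  rw [idealOfVars]
  congr 1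
  ext f
  simp [Fin.exists_fin_succ, eq_comm]

lemma map_iInf_equiv {K A B ι : Type*} [CommRing K] [CommRing A] [CommRing B]
    [Algebra K A] [Algebra K B] (E : A ≃ₐ[K] B) (I : ι → Ideal A) :
    (⨅ i, I i).map E = ⨅ i, (I i).map E := by
  have hsymm (J : Ideal A) : J.map E = J.comap E.symm := (Ideal.comap_symm E.toRingEquiv).symm
  simp only [hsymm, Ideal.comap_iInf]

lemma iInf_fin_succ_eq_inf_last {α : Type*} [CompleteLattice α] {l : ℕ} (f : Fin (l + 1) → α) :
    ⨅ i, f i = (⨅ i : Fin l, f i.castSucc) ⊓ f (Fin.last l) :=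
  le_antisymm (le_inf (le_iInf fun i ↦ iInf_le f i.castSucc) (iInf_le f _)) <|
    le_iInf <| Fin.lastCases inf_le_right fun i ↦ inf_le_of_left_le (iInf_le _ i)

theorem map_iInf_pointIdeal_pow {K : Type*} [CommRing K] {l : ℕ} {p : Fin (l + 1) → Fin 3 → K}
    {e : (Fin 3 → K) ≃ₗ[K] Fin 3 → K} {q : Fin l → Fin 2 → K}
    (hq : ∀ i, e (p i.castSucc) = Fin.cons 0 (q i)) (hlast : e (p (Fin.last l)) = Fin.cons 1 0)
    (m : ℕ) :
    ((⨅ i, pointIdeal (p i) ^ m).map (linearSubstEquiv e)).map (finSuccEquiv K 2) =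
      coeffIdeal (fatPointCoeffs q m) := by
  have hline (i : Fin l) : ((pointIdeal (p i.castSucc)).map (linearSubstEquiv e)).map
      (finSuccEquiv K 2) = Ideal.span {Polynomial.X} ⊔ (pointIdeal (q i)).map Polynomial.C := by
    rw [map_pointIdeal_linearSubstEquiv, hq, map_pointIdeal_cons_zero]
  have hpoint : ((pointIdeal (p (Fin.last l))).map (linearSubstEquiv e)).map (finSuccEquiv K 2) =
      (idealOfVars (Fin 2) K).map Polynomial.C := by
    rw [map_pointIdeal_linearSubstEquiv, hlast, map_pointIdeal_cons_one_zero]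
  rw [map_iInf_equiv, map_iInf_equiv, iInf_fin_succ_eq_inf_last, coeffIdeal_fatPointCoeffs]
  simp only [Ideal.map_pow, hline, hpoint]

lemma finSuccEquiv_rename_succ {R : Type*} [CommRing R] {n : ℕ} (c : MvPolynomial (Fin n) R) :
    finSuccEquiv R n (rename Fin.succ c) = Polynomial.C c := by
  induction c using MvPolynomial.induction_on with
  | C r =>
    rw [rename_C]
    exact (finSuccEquiv R n).commutes r
  | add c c' hc hc' => rw [map_add, map_add, hc, hc', Polynomial.C_add]
  | mul_X c i hc => rw [map_mul, map_mul, hc, rename_X, finSuccEquiv_X_succ, Polynomial.C_mul]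

lemma exists_isHomogeneous_mem_iff_of_map_finSuccEquiv {K : Type*} [CommRing K] {n : ℕ}
    {J : Ideal (MvPolynomial (Fin (n + 1)) K)} {a : ℕ →o Ideal (MvPolynomial (Fin n) K)}
    (hJ : J.map (finSuccEquiv K n) = coeffIdeal a) {d : ℕ} :
    (∃ f ∈ J, f ≠ 0 ∧ f.IsHomogeneous d) ↔
      ∃ k D, k + D = d ∧ ∃ c ∈ a k, c ≠ 0 ∧ c.IsHomogeneous D := by
  have hmem (f : MvPolynomial (Fin (n + 1)) K) :
      f ∈ J ↔ finSuccEquiv K n f ∈ coeffIdeal a := by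
    rw [← hJ, Ideal.mem_map_of_equiv]
    simp only [EmbeddingLike.apply_eq_iff_eq, exists_eq_right]
  constructor
  · rintro ⟨f, hfJ, hf0, hfd⟩
    obtain ⟨k, hk⟩ : ∃ k, (finSuccEquiv K n f).coeff k ≠ 0 := by
      by_contra! h
      exact hf0 ((map_eq_zero_iff _ (finSuccEquiv K n).injective).mp (Polynomial.ext h))
    have hkd : k ≤ d :=
      calc k ≤ (finSuccEquiv K n f).natDegree := Polynomial.le_natDegree_of_ne_zero hk
        _ = f.degreeOf 0 := natDegree_finSuccEquiv f
        _ ≤ f.totalDegree := degreeOf_le_totalDegree f 0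
        _ ≤ d := hfd.totalDegree_le
    exact ⟨k, d - k, Nat.add_sub_of_le hkd, _, (hmem f).mp hfJ k, hk,
      hfd.finSuccEquiv_coeff_isHomogeneous k (d - k) (Nat.add_sub_of_le hkd)⟩
  · rintro ⟨k, D, rfl, c, hc, hc0, hcD⟩
    have himage : finSuccEquiv K n (X 0 ^ k * rename Fin.succ c) = Polynomial.monomial k c := by
      rw [map_mul, map_pow, finSuccEquiv_X_zero, finSuccEquiv_rename_succ, mul_comm,
        Polynomial.C_mul_X_pow_eq_monomial]
    refine ⟨X 0 ^ k * rename Fin.succ c, ?_, ?_, ?_⟩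
    · rw [hmem, himage]
      exact monomial_mem_coeffIdeal hc
    · intro hzero
      rw [hzero, map_zero] at himage
      exact hc0 ((Polynomial.monomial_eq_zero_iff c k).mp himage.symm)
    · exact (isHomogeneous_X_pow 0 k).mul hcD.rename_isHomogeneous

section InitialDegree

variable {K : Type*} [Field K]

lemma hdim_ne_zero_iff {J : Ideal (MvPolynomial (Fin 3) K)} {d : ℕ} :
    hdim J d ≠ 0 ↔ ∃ f ∈ J, f ≠ 0 ∧ f.IsHomogeneous d := by
  have : Module.Finite K (homogeneousSubmodule (Fin 3) K d) :=
    Module.Finite.iff_fg.mpr (homogeneousSubmodule_fg _ _ _)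
  have : Module.Finite K (degComp J d) :=
    Submodule.finiteDimensional_of_le (inf_le_right : degComp J d ≤ _)
  rw [hdim, Ne, Submodule.finrank_eq_zero, ← Ne, Submodule.ne_bot_iff]
  exact ⟨fun ⟨f, ⟨hfJ, hfd⟩, hf0⟩ ↦ ⟨f, hfJ, hf0, hfd⟩,
    fun ⟨f, hfJ, hf0, hfd⟩ ↦ ⟨f, ⟨hfJ, hfd⟩, hf0⟩⟩

lemma hdim_map_linearSubstEquiv (e : (Fin 3 → K) ≃ₗ[K] Fin 3 → K)
    (J : Ideal (MvPolynomial (Fin 3) K)) (d : ℕ) :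
    hdim (J.map (linearSubstEquiv e)) d = hdim J d := by
  have hmap : degComp (J.map (linearSubstEquiv e)) d =
      (degComp J d).map (linearSubstEquiv e).toLinearEquiv.toLinearMap := by
    ext f
    obtain ⟨g, rfl⟩ := (linearSubstEquiv e).surjective f
    have hmem : linearSubstEquiv e g ∈ J.map (linearSubstEquiv e) ↔ g ∈ J := by
      rw [Ideal.mem_map_of_equiv]
      simp only [EmbeddingLike.apply_eq_iff_eq, exists_eq_right]
    exact (and_congr hmem (isHomogeneous_linearSubstEquiv_iff e)).trans
      ((linearSubstEquiv e).toLinearEquiv.injective.mem_set_image (s := degComp J d)).symm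
  rw [hdim, hmap, LinearEquiv.finrank_map_eq, hdim]

end InitialDegree

section FatPointDegree

variable {K ι : Type*} [Field K] {q : ι → Fin 2 → K}

lemma le_of_mem_fatPointCoeffs {m k d : ℕ} {c : MvPolynomial (Fin 2) K}
    (hc : c ∈ fatPointCoeffs q m k) (hc0 : c ≠ 0) (hcd : c.IsHomogeneous d) : m ≤ d := by
  rw [fatPointCoeffs_apply] at hc
  exact le_of_mem_idealOfVars_pow_of_isHomogeneous hc.2 hcd hc0

variable [Fintype ι] (hq : ∀ i, q i ≠ 0)
  (hdist : Pairwise fun i j ↦ eval (q j) (pointForm (q i)) ≠ 0)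
include hq hdist

lemma card_mul_le_of_mem_fatPointCoeffs {m k d : ℕ} {c : MvPolynomial (Fin 2) K}
    (hc : c ∈ fatPointCoeffs q m k) (hc0 : c ≠ 0) (hcd : c.IsHomogeneous d) :
    Fintype.card ι * (m - k) ≤ d := by
  rw [fatPointCoeffs_apply, iInf_pointIdeal_pow hq hdist] at hc
  refine le_of_mem_idealOfVars_pow_of_isHomogeneous ?_ hcd hc0
  exact (Ideal.span_singleton_le_iff_mem _).mpr
    (mem_idealOfVars_pow_of_isHomogeneous ((isHomogeneous_pointsForm q).pow _) le_rfl) hc.1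

lemma pointsForm_pow_mem_fatPointCoeffs [Nonempty ι] (n : ℕ) :
    pointsForm q ^ n ∈ fatPointCoeffs q (Fintype.card ι * n) (Fintype.card ι * n - n) := by
  rw [fatPointCoeffs_apply, iInf_pointIdeal_pow hq hdist,
    Nat.sub_sub_self (Nat.le_mul_of_pos_left n Fintype.card_pos)]
  exact ⟨Ideal.mem_span_singleton_self _,
    mem_idealOfVars_pow_of_isHomogeneous ((isHomogeneous_pointsForm q).pow n) le_rfl⟩

theorem isLeast_hdim_ne_zero [Nonempty ι] {J : Ideal (MvPolynomial (Fin 3) K)} {n : ℕ}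
    (hJ : J.map (finSuccEquiv K 2) = coeffIdeal (fatPointCoeffs q (Fintype.card ι * n))) :
    IsLeast {d | hdim J d ≠ 0} (2 * (Fintype.card ι * n) - n) := by
  have hn : n ≤ Fintype.card ι * n := Nat.le_mul_of_pos_left n Fintype.card_pos
  simp only [hdim_ne_zero_iff, exists_isHomogeneous_mem_iff_of_map_finSuccEquiv hJ]
  constructor
  · exact ⟨Fintype.card ι * n - n, Fintype.card ι * n, by omega, pointsForm q ^ n,
      pointsForm_pow_mem_fatPointCoeffs hq hdist n, pow_ne_zero n (pointsForm_ne_zero hq),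
      (isHomogeneous_pointsForm q).pow n⟩
  · rintro _ ⟨k, d, rfl, c, hc, hc0, hcd⟩
    have hm := le_of_mem_fatPointCoeffs hc hc0 hcd
    rcases le_total (Fintype.card ι * n) (k + n) with hk | hk
    · omega
    · obtain ⟨j, hj⟩ := Nat.exists_eq_add_of_le (Nat.le_sub_of_add_le' hk)
      have hcard := card_mul_le_of_mem_fatPointCoeffs hq hdist hc hc0 hcd
      have hj_le : j ≤ Fintype.card ι * j := Nat.le_mul_of_pos_left j Fintype.card_pos
      rw [hj, mul_add] at hcard
      omega

end FatPointDegree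

section FatPoints

variable {K : Type*} [Field K] {l : ℕ} [NeZero l] {p : Fin (l + 1) → Fin 3 → K}
  {e : (Fin 3 → K) ≃ₗ[K] Fin 3 → K} {q : Fin l → Fin 2 → K}
  (he : ∀ i, e (p i.castSucc) = Fin.cons 0 (q i)) (hlast : e (p (Fin.last l)) = Fin.cons 1 0)
  (hq : ∀ i, q i ≠ 0) (hdist : Pairwise fun i j ↦ eval (q j) (pointForm (q i)) ≠ 0)
include he hlast hq hdist

lemma relFinrank_iInf_pointIdeal_pow (n : ℕ) :
    relFinrank ((⨅ i, pointIdeal (p i) ^ (l * n)).restrictScalars K)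
      ((idealOfVars (Fin 3) K * ⨅ i, pointIdeal (p i) ^ (l * n)).restrictScalars K) =
      2 * (l * n) - n + 1 := by
  have hrank := relFinrank_coeffIdeal_fatPointCoeffs hq hdist n
  rw [Fintype.card_fin] at hrank
  rw [← relFinrank_map_equiv (linearSubstEquiv e), ← relFinrank_map_equiv (finSuccEquiv K 2),
    Ideal.map_mul, Ideal.map_mul, map_idealOfVars_linearSubstEquiv, map_idealOfVars_finSuccEquiv,
    map_iInf_pointIdeal_pow he hlast, hrank]

lemma isLeast_hdim_iInf_pointIdeal_pow_ne_zero (n : ℕ) :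
    IsLeast {d | hdim (⨅ i, pointIdeal (p i) ^ (l * n)) d ≠ 0} (2 * (l * n) - n) := by
  have hleast := isLeast_hdim_ne_zero (n := n) hq hdist
    ((map_iInf_pointIdeal_pow he hlast _).trans (by rw [Fintype.card_fin]))
  simp only [hdim_map_linearSubstEquiv, Fintype.card_fin] at hleast
  exact hleast

end FatPoints

theorem stmt_7_general (K : Type*) [Field K] (l : ℕ) (hl : 0 < l)
    (p : Fin (l + 1) → Fin 3 → K) (hp0 : ∀ i, p i ≠ 0)
    (hdist : ∀ i j, i ≠ j → ∀ c : K, c • p i ≠ p j)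
    (L : Fin 3 → K)
    (hon : ∀ i : Fin (l + 1), (i : ℕ) < l → ∑ j, L j * p i j = 0)
    (hoff : ∑ j, L j * p (Fin.last l) j ≠ 0)
    (P : Fin (l + 1) → Ideal (MvPolynomial (Fin 3) K))
    (hP : ∀ i F, F ∈ P i ↔ ∀ n, eval (p i) (homogeneousComponent n F) = 0)
    (m : ℕ) (hdvd : l ∣ m)
    (Im : Ideal (MvPolynomial (Fin 3) K)) (hIm : Im = ⨅ i, P i ^ m)
    (MaxI : Ideal (MvPolynomial (Fin 3) K))
    (hMax : MaxI = Ideal.span {X 0, X 1, X 2}) :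
    Module.finrank K
      (↥(Submodule.restrictScalars K Im) ⧸
        Submodule.comap (Submodule.restrictScalars K Im).subtype
          (Submodule.restrictScalars K (MaxI * Im))) = 2 * m - m / l + 1 ∧
    2 * m - m / l + 1 = sInf {d | hdim Im d ≠ 0} + 1 := by
  have : NeZero l := ⟨hl.ne'⟩
  obtain ⟨n, rfl⟩ := hdvd
  obtain rfl : P = fun i ↦ pointIdeal (p i) :=
    funext fun i ↦ Ideal.ext fun F ↦ (hP i F).trans mem_pointIdeal.symm
  obtain ⟨e, q, he, hlast, hq, hqdist⟩ := exists_linearEquiv_apply_castSucc_eq_cons hp0 hdist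
    (dotProductBilin K K L) (fun i ↦ hon i.castSucc i.isLt) hoff
  rw [hIm, hMax, ← idealOfVars_fin_three, Nat.mul_div_cancel_left n hl]
  exact ⟨relFinrank_iInf_pointIdeal_pow he hlast hq hqdist n,
    congrArg (· + 1) (isLeast_hdim_iInf_pointIdeal_pow_ne_zero he hlast hq hqdist n).csInf_eq.symm⟩

theorem stmt_7
    (K : Type*) [Field K] [CharZero K]
    -- `l > 2` points on a line plus one point off the line
    (l : ℕ) (hl : 2 < l)
    (p : Fin (l + 1) → Fin 3 → K) (hp0 : ∀ i, p i ≠ 0)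
    (hdist : ∀ i j, i ≠ j → ∀ c : K, c • p i ≠ p j)
    (L : Fin 3 → K) (hL : L ≠ 0)
    (hon : ∀ i : Fin (l + 1), (i : ℕ) < l → ∑ j, L j * p i j = 0)
    (hoff : ∑ j, L j * p (Fin.last l) j ≠ 0)
    -- `P i` is the homogeneous prime ideal of all forms vanishing at `p i`
    (P : Fin (l + 1) → Ideal (MvPolynomial (Fin 3) K))
    (hP : ∀ i F, F ∈ P i ↔ ∀ n, eval (p i) (homogeneousComponent n F) = 0)
    -- the uniform fat point ideal `I^{(m)} = P_1^m ∩ ⋯ ∩ P_{l+1}^m`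
    (m : ℕ) (hm : 1 ≤ m) (hdvd : l * (l - 1) ∣ m)
    (Im : Ideal (MvPolynomial (Fin 3) K)) (hIm : Im = ⨅ i, P i ^ m)
    -- `MaxI = (x, y, z)` is the irrelevant maximal ideal
    (MaxI : Ideal (MvPolynomial (Fin 3) K))
    (hMax : MaxI = Ideal.span {X 0, X 1, X 2}) :
    -- `dim_K ( I^{(m)} / ((x,y,z)·I^{(m)}) ) = 2m − m/l + 1`
    Module.finrank K
      (↥(Submodule.restrictScalars K Im) ⧸
        Submodule.comap (Submodule.restrictScalars K Im).subtype
          (Submodule.restrictScalars K (MaxI * Im))) = 2 * m - m / l + 1 ∧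
    -- which is one more than the least degree of a nonzero homogeneous element of `I^{(m)}`
    2 * m - m / l + 1 = sInf {d | hdim Im d ≠ 0} + 1 :=
  stmt_7_general K l (by omega) p hp0 hdist L hon hoff P hP m (dvd_of_mul_right_dvd hdvd) Im hIm
    MaxI hMax
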